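/- Let q ∈ 𝕀 be an 𝕀-primitive admissible icosian, and let α ∈ 𝔬 be such that n := α²·nr(q) is a positive rational integer which is minimal among all positive rational integers of the form β²·nr(q) with β ∈ 𝔬 (such α exists, and q_α := αq is the extension of q, with q̃_α = α′q̃). Then the coincidence site lattice determined by q is L ∩ (1/|q q̃|)·qLq̃ = {q_α x + x̃ q̃_α : x ∈ 𝕀} = φ₊(q_α 𝕀), where φ₊(y) = y + ỹ. -/

import Mathlib

/-!
Write `p = α q` for the extension of `q`. Conjugating `n = α² nr(q)` gives `nr(p) = nr(p̃) = n`, and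
`|q q̃| |α α'| = n`, so `x ↦ q x q̃ / |q q̃|` agrees up to sign with `x ↦ p x p̃ / n`. The twist is an
anti-automorphism of `𝕀` fixing `L` pointwise (`L_fixed`), and `φ₊(𝕀) ⊆ L` (`phi_mem_L`).

The inclusion `⊇` is then the identity `p x + x̃ p̃ = p (x r + p̄ x̃) p̃ / n`, with `r` the quaternion
conjugate of `p̃`; the bracket is `φ₊(p̄ x̃) ∈ L`.

For `⊆`, let `z ∈ L` with `n z = p y p̃`, `y ∈ L`, that is, `p̄ z = y p̃`. For `g ∈ 𝕀` with
`t = tr(p g) = p g + ḡ p̄` one gets `t z = p (g z) + (ḡ y) p̃` (`trace_smul_mem`). As `z` is fixed by the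
twist, adding the twisted equation shows `(t + t') z = φ₊(p w)` for some `w ∈ 𝕀`, so it remains to
find `g` with `t + t' = 1`. The trace form on `𝕀` is unimodular and `𝔬` is a principal ideal domain,
so primitivity of `q` provides `g₀ ∈ 𝕀` with `tr(q g₀) = 1` (`exists_trace_one`). Minimality of `n`
makes `α` and `α'` coprime, and indeed provides `s ∈ 𝔬` with `s α + s' α' = 1` (`coprime_conj`). Now take
`g = s g₀`.
-/

noncomputable section

open Quaternion

/-- Hamilton's quaternion algebra over `ℝ`. -/
abbrev HR := Quaternion ℝ

/-- the golden ratio `τ = (1+√5)/2`. -/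
def tau : ℝ := (1 + Real.sqrt 5) / 2

/-- membership in the quadratic field `K = ℚ(√5)`, viewed inside `ℝ`. -/
def inK (x : ℝ) : Prop := ∃ q r : ℚ, x = (q : ℝ) + (r : ℝ) * Real.sqrt 5

/-- membership in the ring of integers `𝔬 = ℤ[τ]` of `K`, viewed inside `ℝ`. -/
def inO (x : ℝ) : Prop := ∃ m n : ℤ, x = (m : ℝ) + (n : ℝ) * tau

/-- membership in `ℍ(K)`: all four components lie in `K`. -/
def inHK (q : HR) : Prop := inK q.re ∧ inK q.imI ∧ inK q.imJ ∧ inK q.imK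

open scoped Classical in
/-- Galois conjugation `′` on `K = ℚ(√5)`, sending `q + r√5` to `q - r√5`
(extended by the identity off `K`; on `K` this is the usual Galois conjugation,
since the representation `x = q + r√5` with `q, r ∈ ℚ` is unique). -/
noncomputable def gal (x : ℝ) : ℝ :=
  if h : ∃ q r : ℚ, x = (q : ℝ) + (r : ℝ) * Real.sqrt 5 then
    ((h.choose : ℝ) - (h.choose_spec.choose : ℝ) * Real.sqrt 5)
  else x

/-- the twist map `q = (a,b,c,d) ↦ q̃ = (a′,b′,d′,c′)` on `ℍ(K)`. -/
def twist (q : HR) : HR := ⟨gal q.re, gal q.imI, gal q.imK, gal q.imJ⟩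

def v₁ : HR := ⟨1, 0, 0, 0⟩
def v₂ : HR := ⟨0, 1, 0, 0⟩
def v₃ : HR := ⟨1/2, 1/2, 1/2, 1/2⟩
def v₄ : HR := ⟨(1 - tau)/2, tau/2, 0, 1/2⟩

/-- membership in the icosian ring `𝕀`: the `𝔬`-span of
`(1,0,0,0)`, `(0,1,0,0)`, `½(1,1,1,1)`, `½(1−τ,τ,0,1)`. -/
def inIcosian (q : HR) : Prop :=
  ∃ a b c d : ℝ, inO a ∧ inO b ∧ inO c ∧ inO d ∧
    q = a • v₁ + b • v₂ + c • v₃ + d • v₄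

def w₁ : HR := ⟨1, 0, 0, 0⟩
def w₂ : HR := ⟨-(1/2), 1/2, 1/2, 1/2⟩
def w₃ : HR := ⟨0, -1, 0, 0⟩
def w₄ : HR := ⟨0, 1/2, (tau - 1)/2, -(tau/2)⟩

/-- the lattice `L` (a copy of the root lattice `A₄`): the `ℤ`-span of
`(1,0,0,0)`, `½(−1,1,1,1)`, `(0,−1,0,0)`, `½(0,1,τ−1,−τ)`. -/
def Lsub : AddSubgroup HR :=
  (Submodule.span ℤ ({w₁, w₂, w₃, w₄} : Set HR)).toAddSubgroup

/-- `Λ` is a similar sublattice (SSL) of `L`: `Λ = α R(L) ⊆ L` for some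
`α > 0` and a linear isometry `R` of `ℍ ≅ ℝ⁴`. -/
def IsSSL (Λ : AddSubgroup HR) : Prop :=
  ∃ (α : ℝ) (R : HR ≃ₗᵢ[ℝ] HR), 0 < α ∧
    (Λ : Set HR) = (fun x => α • R x) '' (Lsub : Set HR) ∧ Λ ≤ Lsub

/-- `p` is an `𝕀`-primitive icosian: `p ∈ 𝕀` and whenever `α ∈ K` with
`α p ∈ 𝕀`, one has `α ∈ 𝔬`. -/
def IPrimitive (p : HR) : Prop :=
  inIcosian p ∧ ∀ α : ℝ, inK α → inIcosian (α • p) → inO α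

/-- an icosian `q` is admissible when `|q q̃|` is a rational integer. -/
def Admissible (q : HR) : Prop := ∃ n : ℤ, ‖q * twist q‖ = (n : ℝ)

lemma inO_add {x y : ℝ} (hx : inO x) (hy : inO y) : inO (x + y) := by
  obtain ⟨m, n, rfl⟩ := hx; obtain ⟨m', n', rfl⟩ := hy
  exact ⟨m + m', n + n', by push_cast; ring⟩

lemma inO_neg {x : ℝ} (hx : inO x) : inO (-x) := by
  obtain ⟨m, n, rfl⟩ := hx
  exact ⟨-m, -n, by push_cast; ring⟩

/-- the icosian ring `𝕀` as an additive subgroup of `ℍ`. -/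
def Isub : AddSubgroup HR where
  carrier := {q | inIcosian q}
  zero_mem' := ⟨0, 0, 0, 0, ⟨0, 0, by push_cast; ring⟩, ⟨0, 0, by push_cast; ring⟩,
    ⟨0, 0, by push_cast; ring⟩, ⟨0, 0, by push_cast; ring⟩, by simp⟩
  add_mem' := by
    rintro x y ⟨a, b, c, d, ha, hb, hc, hd, rfl⟩ ⟨a', b', c', d', ha', hb', hc', hd', rfl⟩
    exact ⟨a + a', b + b', c + c', d + d', inO_add ha ha', inO_add hb hb',
      inO_add hc hc', inO_add hd hd', by simp [add_smul]; abel⟩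
  neg_mem' := by
    rintro x ⟨a, b, c, d, ha, hb, hc, hd, rfl⟩
    exact ⟨-a, -b, -c, -d, inO_neg ha, inO_neg hb, inO_neg hc, inO_neg hd,
      by simp [neg_smul]; abel⟩

/-- the additive map `x ↦ p x p̃`. -/
def conjHom (p : HR) : HR →+ HR :=
  AddMonoidHom.mk' (fun x => p * x * twist p) (fun a b => by simp [mul_add, add_mul])

/-- the additive map `x ↦ (1/|q q̃|) · q x q̃`. -/
def cslHom (q : HR) : HR →+ HR :=
  AddMonoidHom.mk' (fun x => (1 / ‖q * twist q‖) • (q * x * twist q))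
    (fun a b => by simp [mul_add, add_mul, smul_add])

/-- the subgroup `L ∩ (1/|q q̃|) · q L q̃` of `ℍ`. -/
def cslSub (q : HR) : AddSubgroup HR := Lsub ⊓ Lsub.map (cslHom q)

/-- for a rotation `R`, the subgroup `Γ ∩ R(Γ)`. -/
def cslOf (Γ : AddSubgroup HR) (R : HR ≃ₗᵢ[ℝ] HR) : AddSubgroup HR :=
  Γ ⊓ Γ.map R.toLinearEquiv.toLinearMap.toAddMonoidHom

/-- the standard Euclidean inner product on `ℍ ≅ ℝ⁴`. -/
def dot (x y : HR) : ℝ := x.re * y.re + x.imI * y.imI + x.imJ * y.imJ + x.imK * y.imK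

/-- the dual lattice `L* = {x ∈ ℍ : ⟨x|y⟩ ∈ ℤ for all y ∈ L}`. -/
def Ldual : AddSubgroup HR where
  carrier := {x | ∀ y ∈ Lsub, ∃ n : ℤ, dot x y = n}
  zero_mem' := by intro y _; exact ⟨0, by simp [dot]⟩
  add_mem' := by
    intro a b ha hb y hy
    obtain ⟨m, hm⟩ := ha y hy; obtain ⟨n, hn⟩ := hb y hy
    refine ⟨m + n, ?_⟩
    have : dot (a + b) y = dot a y + dot b y := by simp [dot]; ring
    rw [this, hm, hn]; push_cast; ring
  neg_mem' := by
    intro a ha y hy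
    obtain ⟨m, hm⟩ := ha y hy
    refine ⟨-m, ?_⟩
    have : dot (-a) y = -dot a y := by simp [dot]; ring
    rw [this, hm]; push_cast; ring

/-! ### Arithmetic of `𝔬` and `K` inside `ℝ` -/

lemma tau_sq : tau ^ 2 = tau + 1 := by
  have h : Real.sqrt 5 ^ 2 = 5 := Real.sq_sqrt (by norm_num)
  unfold tau
  linear_combination h / 4

lemma inO_int (m : ℤ) : inO (m : ℝ) := ⟨m, 0, by simp⟩

lemma inO_zero : inO 0 := ⟨0, 0, by simp⟩

lemma inO_one : inO 1 := ⟨1, 0, by simp⟩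

lemma inO_tau : inO tau := ⟨0, 1, by simp⟩

lemma inO_sub {x y : ℝ} (hx : inO x) (hy : inO y) : inO (x - y) := by
  rw [sub_eq_add_neg]; exact inO_add hx (inO_neg hy)

lemma inO_mul {x y : ℝ} (hx : inO x) (hy : inO y) : inO (x * y) := by
  obtain ⟨m, n, rfl⟩ := hx; obtain ⟨k, l, rfl⟩ := hy
  refine ⟨m * k + n * l, m * l + n * k + n * l, ?_⟩
  push_cast
  linear_combination (n : ℝ) * l * tau_sq

lemma inO_ofNat (k : ℕ) [k.AtLeastTwo] : inO (OfNat.ofNat k : ℝ) :=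
  ⟨OfNat.ofNat k, 0, by simp⟩

lemma inK_of_inO {x : ℝ} (hx : inO x) : inK x := by
  obtain ⟨m, n, rfl⟩ := hx
  refine ⟨m + n / 2, n / 2, ?_⟩
  unfold tau; push_cast; ring

lemma inK_rat (r : ℚ) : inK (r : ℝ) := ⟨r, 0, by simp⟩

lemma inK_add {x y : ℝ} (hx : inK x) (hy : inK y) : inK (x + y) := by
  obtain ⟨a, b, rfl⟩ := hx; obtain ⟨c, d, rfl⟩ := hy
  exact ⟨a + c, b + d, by push_cast; ring⟩

lemma inK_neg {x : ℝ} (hx : inK x) : inK (-x) := by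
  obtain ⟨a, b, rfl⟩ := hx
  exact ⟨-a, -b, by push_cast; ring⟩

lemma inK_sub {x y : ℝ} (hx : inK x) (hy : inK y) : inK (x - y) := by
  rw [sub_eq_add_neg]; exact inK_add hx (inK_neg hy)

lemma inK_mul {x y : ℝ} (hx : inK x) (hy : inK y) : inK (x * y) := by
  obtain ⟨a, b, rfl⟩ := hx; obtain ⟨c, d, rfl⟩ := hy
  refine ⟨a * c + 5 * b * d, a * d + b * c, ?_⟩
  have h : Real.sqrt 5 ^ 2 = 5 := Real.sq_sqrt (by norm_num)
  push_cast
  linear_combination (b : ℝ) * d * h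

lemma irrational_sqrt5 : Irrational (Real.sqrt 5) := by
  have := Nat.Prime.irrational_sqrt (p := 5) (by norm_num)
  simpa using this

/-- Coordinates with respect to `1, √5` are unique. -/
lemma rep_unique {a b c d : ℚ} (h : (a : ℝ) + b * Real.sqrt 5 = c + d * Real.sqrt 5) :
    a = c ∧ b = d := by
  have hbd : b = d := by
    by_contra hne
    have hne' : ((b - d : ℚ) : ℝ) ≠ 0 := by
      exact_mod_cast sub_ne_zero.mpr hne
    apply irrational_sqrt5
    refine ⟨(c - a) / (b - d), ?_⟩
    push_cast at hne' ⊢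
    rw [div_eq_iff hne']
    linear_combination -h
  subst hbd
  refine ⟨?_, rfl⟩
  have : (a : ℝ) = c := by linarith
  exact_mod_cast this

lemma gal_eq (a b : ℚ) : gal ((a : ℝ) + b * Real.sqrt 5) = a - b * Real.sqrt 5 := by
  have h : ∃ q r : ℚ, (a : ℝ) + b * Real.sqrt 5 = (q : ℝ) + (r : ℝ) * Real.sqrt 5 := ⟨a, b, rfl⟩
  unfold gal
  rw [dif_pos h]
  obtain ⟨h1, h2⟩ := rep_unique h.choose_spec.choose_spec
  exact congrArg₂ (fun x y : ℚ => (x : ℝ) - y * Real.sqrt 5) h1.symm h2.symm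

lemma gal_rat (a : ℚ) : gal (a : ℝ) = a := by
  simpa using gal_eq a 0

lemma gal_intCast (a : ℤ) : gal (a : ℝ) = a := by
  simpa using gal_rat a

lemma gal_zero : gal 0 = 0 := by simpa using gal_rat 0

lemma gal_one : gal 1 = 1 := by simpa using gal_rat 1

lemma gal_add {x y : ℝ} (hx : inK x) (hy : inK y) : gal (x + y) = gal x + gal y := by
  obtain ⟨a, b, rfl⟩ := hx; obtain ⟨c, d, rfl⟩ := hy
  have := gal_eq (a + c) (b + d)
  rw [gal_eq, gal_eq, show (a : ℝ) + b * Real.sqrt 5 + (c + d * Real.sqrt 5)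
    = ((a + c : ℚ) : ℝ) + ((b + d : ℚ) : ℝ) * Real.sqrt 5 by push_cast; ring, this]
  push_cast; ring

lemma gal_neg {x : ℝ} (hx : inK x) : gal (-x) = -gal x := by
  obtain ⟨a, b, rfl⟩ := hx
  have := gal_eq (-a) (-b)
  rw [gal_eq, show -((a : ℝ) + b * Real.sqrt 5)
    = ((-a : ℚ) : ℝ) + ((-b : ℚ) : ℝ) * Real.sqrt 5 by push_cast; ring, this]
  push_cast; ring

lemma gal_sub {x y : ℝ} (hx : inK x) (hy : inK y) : gal (x - y) = gal x - gal y := by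
  rw [sub_eq_add_neg, gal_add hx (inK_neg hy), gal_neg hy, sub_eq_add_neg]

lemma gal_mul {x y : ℝ} (hx : inK x) (hy : inK y) : gal (x * y) = gal x * gal y := by
  obtain ⟨a, b, rfl⟩ := hx; obtain ⟨c, d, rfl⟩ := hy
  have := gal_eq (a * c + 5 * b * d) (a * d + b * c)
  have h : Real.sqrt 5 ^ 2 = 5 := Real.sq_sqrt (by norm_num)
  rw [gal_eq, gal_eq, show ((a : ℝ) + b * Real.sqrt 5) * (c + d * Real.sqrt 5)
    = ((a * c + 5 * b * d : ℚ) : ℝ) + ((a * d + b * c : ℚ) : ℝ) * Real.sqrt 5 by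
      push_cast; linear_combination (b : ℝ) * d * h, this]
  push_cast; linear_combination -(b : ℝ) * d * h

lemma inK_gal {x : ℝ} (hx : inK x) : inK (gal x) := by
  obtain ⟨a, b, rfl⟩ := hx
  rw [gal_eq]
  exact ⟨a, -b, by push_cast; ring⟩

lemma gal_gal {x : ℝ} (hx : inK x) : gal (gal x) = x := by
  obtain ⟨a, b, rfl⟩ := hx
  have := gal_eq a (-b)
  push_cast at this
  rw [gal_eq, show (a : ℝ) - b * Real.sqrt 5 = a + -b * Real.sqrt 5 by ring, this]
  ring

lemma gal_rep (m n : ℤ) : gal ((m : ℝ) + n * tau) = m + n * (1 - tau) := by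
  have := gal_eq (m + n / 2) (n / 2)
  push_cast at this
  rw [show (m : ℝ) + n * tau = m + n / 2 + n / 2 * Real.sqrt 5 by unfold tau; ring, this]
  unfold tau; ring

lemma gal_tau : gal tau = 1 - tau := by simpa using gal_rep 0 1

lemma inO_gal {x : ℝ} (hx : inO x) : inO (gal x) := by
  obtain ⟨m, n, rfl⟩ := hx
  rw [gal_rep]
  exact ⟨m + n, -n, by push_cast; ring⟩

/-- `𝔬 ∩ ℚ = ℤ`. -/
lemma int_of_inO_rat {r : ℚ} (h : inO (r : ℝ)) : ∃ m : ℤ, (r : ℝ) = m := by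
  obtain ⟨m, n, hmn⟩ := h
  have h2 : (r : ℝ) + (0 : ℚ) * Real.sqrt 5
      = ((m + n / 2 : ℚ) : ℝ) + ((n / 2 : ℚ) : ℝ) * Real.sqrt 5 := by
    rw [hmn]; unfold tau; push_cast; ring
  obtain ⟨h3, h4⟩ := rep_unique h2
  refine ⟨m, ?_⟩
  rw [h3, ← h4]; push_cast; ring

lemma inK_inv {x : ℝ} (hx : inK x) : inK x⁻¹ := by
  by_cases h0 : x = 0
  · subst h0; simpa using inK_rat 0
  obtain ⟨a, b, rfl⟩ := hx
  have h : Real.sqrt 5 ^ 2 = 5 := Real.sq_sqrt (by norm_num)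
  have hN : (a : ℝ) ^ 2 - 5 * b ^ 2 ≠ 0 := by
    have h1 : (a : ℝ) - b * Real.sqrt 5 ≠ 0 := by
      intro hc
      have : (a : ℝ) + (-b : ℚ) * Real.sqrt 5 = (0 : ℚ) + (0 : ℚ) * Real.sqrt 5 := by
        push_cast; linear_combination hc
      obtain ⟨h2, h3⟩ := rep_unique this
      apply h0
      rw [h2, show b = 0 by linarith]; simp
    have := mul_ne_zero h0 h1
    rwa [show ((a : ℝ) + b * Real.sqrt 5) * (a - b * Real.sqrt 5) = a ^ 2 - 5 * b ^ 2 by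
      linear_combination -(b : ℝ) ^ 2 * h] at this
  refine ⟨a / (a ^ 2 - 5 * b ^ 2), -b / (a ^ 2 - 5 * b ^ 2), ?_⟩
  push_cast
  apply inv_eq_of_mul_eq_one_right
  rw [show ((a : ℝ) + b * Real.sqrt 5) * (a / (a ^ 2 - 5 * b ^ 2)
      + -b / (a ^ 2 - 5 * b ^ 2) * Real.sqrt 5)
    = (a ^ 2 - b ^ 2 * Real.sqrt 5 ^ 2) / (a ^ 2 - 5 * b ^ 2) by ring, h, mul_comm ((b : ℝ) ^ 2),
    div_self hN]

lemma exists_round (X N : ℤ) (hN : N ≠ 0) : ∃ k : ℤ, 2 * |X - k * N| ≤ |N| := by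
  refine ⟨round ((X : ℚ) / N), ?_⟩
  have h := abs_sub_round ((X : ℚ) / N)
  have hN' : (N : ℚ) ≠ 0 := by exact_mod_cast hN
  have h2 : |(X : ℚ) - round ((X : ℚ) / N) * N|
      = |(X : ℚ) / N - round ((X : ℚ) / N)| * |(N : ℚ)| := by
    rw [← abs_mul, sub_mul, div_mul_cancel₀ _ hN']
  have h3 : 2 * |(X : ℚ) - round ((X : ℚ) / N) * N| ≤ |(N : ℚ)| := by
    rw [h2]; nlinarith [abs_nonneg (N : ℚ)]
  exact_mod_cast h3

lemma norm_bound {r s N : ℤ} (hN : N ≠ 0) (hr : 2 * |r| ≤ |N|) (hs : 2 * |s| ≤ |N|) :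
    |r ^ 2 + r * s - s ^ 2| < |N| ^ 2 := by
  have hNpos : 0 < |N| := abs_pos.mpr hN
  have hr2 : 4 * r ^ 2 ≤ |N| ^ 2 := by nlinarith [abs_nonneg r, sq_abs r]
  have hs2 : 4 * s ^ 2 ≤ |N| ^ 2 := by nlinarith [abs_nonneg s, sq_abs s]
  have hN2 : 0 < |N| ^ 2 := by positivity
  rw [abs_lt]
  constructor <;> nlinarith [sq_nonneg (r - s), sq_nonneg (r + s)]

/-- Division with remainder in `𝔬`, for the absolute value of the norm `a² + ab - b²` of
`a + bτ`: rounding the coordinates of the exact quotient leaves a remainder of smaller norm. -/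
lemma euclid (a b c e : ℤ) (hN : c ^ 2 + c * e - e ^ 2 ≠ 0) :
    ∃ k l : ℤ, |(a - (k * c + l * e)) ^ 2 +
      (a - (k * c + l * e)) * (b - (k * e + l * c + l * e)) -
      (b - (k * e + l * c + l * e)) ^ 2| < |c ^ 2 + c * e - e ^ 2| := by
  -- The numerators are the coordinates of `a + b τ` times the conjugate of `c + e τ`.
  obtain ⟨k, hk⟩ := exists_round (a * c + a * e - b * e) _ hN
  obtain ⟨l, hl⟩ := exists_round (b * c - a * e) _ hN
  refine ⟨k, l, ?_⟩
  have hb := norm_bound hN hk hl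
  refine lt_of_mul_lt_mul_right ?_ (abs_nonneg (c ^ 2 + c * e - e ^ 2))
  rw [← abs_mul, ← pow_two]
  refine lt_of_eq_of_lt (congrArg abs ?_) hb
  ring

/-- Every nonzero ideal of `𝔬` (a set closed under subtraction and multiplication by `𝔬`)
is principal: a nonzero element of least absolute norm divides all the others. -/
lemma exists_generator (S : Set ℝ) (hO : ∀ x ∈ S, inO x)
    (hsub : ∀ x ∈ S, ∀ y ∈ S, x - y ∈ S) (hmul : ∀ x ∈ S, ∀ r, inO r → r * x ∈ S)
    (hne : ∃ x ∈ S, x ≠ 0) :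
    ∃ δ ∈ S, δ ≠ 0 ∧ ∀ x ∈ S, ∃ r, inO r ∧ x = r * δ := by
  have norm_ne : ∀ c e : ℤ, (c : ℝ) + e * tau ≠ 0 → c ^ 2 + c * e - e ^ 2 ≠ 0 := by
    intro c e h hc
    have hc' : (c : ℝ) ^ 2 + c * e - e ^ 2 = 0 := by exact_mod_cast hc
    have h1 : ((c : ℝ) + e * tau) * (c + e * (1 - tau)) = 0 := by
      linear_combination hc' - (e : ℝ) ^ 2 * tau_sq
    have h2 : (c : ℝ) + e * (1 - tau) = 0 := (mul_eq_zero.mp h1).resolve_left h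
    have h3 := congrArg gal (show (c : ℝ) + e * (1 - tau) = ((0 : ℤ) : ℝ) by simpa using h2)
    rw [← gal_rep, gal_gal (inK_of_inO ⟨c, e, rfl⟩), gal_intCast] at h3
    exact h (by simpa using h3)
  let P : ℕ → Prop := fun N => ∃ c e : ℤ, (c : ℝ) + e * tau ∈ S ∧ (c : ℝ) + e * tau ≠ 0 ∧
    (c ^ 2 + c * e - e ^ 2).natAbs = N
  have hP : ∃ N, P N := by
    obtain ⟨x, hxS, hx0⟩ := hne
    obtain ⟨c, e, rfl⟩ := hO x hxS
    exact ⟨_, c, e, hxS, hx0, rfl⟩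
  classical
  obtain ⟨c, e, hS, h0, hN⟩ := Nat.find_spec hP
  refine ⟨_, hS, h0, ?_⟩
  intro x hx
  obtain ⟨a, b, rfl⟩ := hO x hx
  obtain ⟨k, l, hkl⟩ := euclid a b c e (norm_ne c e h0)
  refine ⟨(k : ℝ) + l * tau, ⟨k, l, rfl⟩, ?_⟩
  by_contra hne'
  have hmem := hsub _ hx _ (hmul _ hS ((k : ℝ) + l * tau) ⟨k, l, rfl⟩)
  have hrep : (a : ℝ) + b * tau - ((k : ℝ) + l * tau) * ((c : ℝ) + e * tau)
      = ((a - (k * c + l * e) : ℤ) : ℝ) + ((b - (k * e + l * c + l * e) : ℤ) : ℝ) * tau := by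
    push_cast; linear_combination -(l : ℝ) * e * tau_sq
  have h0' := sub_ne_zero.mpr hne'
  rw [hrep] at hmem h0'
  have hlt := Int.natAbs_lt_natAbs_of_nonneg_of_lt (abs_nonneg _) hkl
  rw [Int.natAbs_abs, Int.natAbs_abs, hN] at hlt
  exact Nat.find_min hP hlt ⟨_, _, hmem, h0', rfl⟩

/-! ### The icosian ring and the twist map -/

lemma v1_comp : v₁.re = 1 ∧ v₁.imI = 0 ∧ v₁.imJ = 0 ∧ v₁.imK = 0 := ⟨rfl, rfl, rfl, rfl⟩

lemma v2_comp : v₂.re = 0 ∧ v₂.imI = 1 ∧ v₂.imJ = 0 ∧ v₂.imK = 0 := ⟨rfl, rfl, rfl, rfl⟩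

lemma v3_comp : v₃.re = 1 / 2 ∧ v₃.imI = 1 / 2 ∧ v₃.imJ = 1 / 2 ∧ v₃.imK = 1 / 2 :=
  ⟨rfl, rfl, rfl, rfl⟩

lemma v4_comp : v₄.re = (1 - tau) / 2 ∧ v₄.imI = tau / 2 ∧ v₄.imJ = 0 ∧ v₄.imK = 1 / 2 :=
  ⟨rfl, rfl, rfl, rfl⟩

lemma w1_comp : w₁.re = 1 ∧ w₁.imI = 0 ∧ w₁.imJ = 0 ∧ w₁.imK = 0 := ⟨rfl, rfl, rfl, rfl⟩

lemma w2_comp : w₂.re = -(1 / 2) ∧ w₂.imI = 1 / 2 ∧ w₂.imJ = 1 / 2 ∧ w₂.imK = 1 / 2 :=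
  ⟨rfl, rfl, rfl, rfl⟩

lemma w3_comp : w₃.re = 0 ∧ w₃.imI = -1 ∧ w₃.imJ = 0 ∧ w₃.imK = 0 := ⟨rfl, rfl, rfl, rfl⟩

lemma w4_comp : w₄.re = 0 ∧ w₄.imI = 1 / 2 ∧ w₄.imJ = (tau - 1) / 2 ∧ w₄.imK = -(tau / 2) :=
  ⟨rfl, rfl, rfl, rfl⟩

lemma twist_comp (x : HR) : (twist x).re = gal x.re ∧ (twist x).imI = gal x.imI ∧
    (twist x).imJ = gal x.imK ∧ (twist x).imK = gal x.imJ := ⟨rfl, rfl, rfl, rfl⟩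

lemma v1_eq : v₁ = 1 := by ext <;> simp [v1_comp]

lemma icosian_add {x y : HR} (hx : inIcosian x) (hy : inIcosian y) : inIcosian (x + y) :=
  Isub.add_mem hx hy

lemma icosian_smul {r : ℝ} {x : HR} (hr : inO r) (hx : inIcosian x) : inIcosian (r • x) := by
  obtain ⟨a, b, c, d, ha, hb, hc, hd, rfl⟩ := hx
  exact ⟨r * a, r * b, r * c, r * d, inO_mul hr ha, inO_mul hr hb, inO_mul hr hc,
    inO_mul hr hd, by simp [smul_add, mul_smul]⟩

lemma icosian_v1 : inIcosian v₁ :=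
  ⟨1, 0, 0, 0, inO_one, inO_zero, inO_zero, inO_zero, by simp⟩

lemma icosian_v2 : inIcosian v₂ :=
  ⟨0, 1, 0, 0, inO_zero, inO_one, inO_zero, inO_zero, by simp⟩

lemma icosian_v3 : inIcosian v₃ :=
  ⟨0, 0, 1, 0, inO_zero, inO_zero, inO_one, inO_zero, by simp⟩

lemma icosian_v4 : inIcosian v₄ :=
  ⟨0, 0, 0, 1, inO_zero, inO_zero, inO_zero, inO_one, by simp⟩

/-- A combination of the basis with coordinates `m + nτ`, given by eight integers. -/
lemma icosian_of_ints {x : HR} (a b c d e f g h : ℤ)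
    (hx : x = ((a : ℝ) + b * tau) • v₁ + ((c : ℝ) + d * tau) • v₂ + ((e : ℝ) + f * tau) • v₃
      + ((g : ℝ) + h * tau) • v₄) : inIcosian x :=
  ⟨_, _, _, _, ⟨a, b, rfl⟩, ⟨c, d, rfl⟩, ⟨e, f, rfl⟩, ⟨g, h, rfl⟩, hx⟩

-- The multiplication table of the basis, without the trivial row and column of `v₁ = 1`.
lemma icosian_v22 : inIcosian (v₂ * v₂) := by
  refine icosian_of_ints (-1) 0 0 0 0 0 0 0 ?_
  ext <;> simp [v1_comp, v2_comp, v3_comp, v4_comp] <;> grind [tau_sq]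

lemma icosian_v23 : inIcosian (v₂ * v₃) := by
  refine icosian_of_ints (-1) 1 1 (-1) (-1) 0 2 0 ?_
  ext <;> simp [v1_comp, v2_comp, v3_comp, v4_comp] <;> grind [tau_sq]

lemma icosian_v24 : inIcosian (v₂ * v₄) := by
  refine icosian_of_ints 0 0 1 (-1) (-1) 0 1 0 ?_
  ext <;> simp [v1_comp, v2_comp, v3_comp, v4_comp] <;> grind [tau_sq]

lemma icosian_v32 : inIcosian (v₃ * v₂) := by
  refine icosian_of_ints 0 (-1) 0 1 1 0 (-2) 0 ?_
  ext <;> simp [v1_comp, v2_comp, v3_comp, v4_comp] <;> grind [tau_sq]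

lemma icosian_v33 : inIcosian (v₃ * v₃) := by
  refine icosian_of_ints (-1) 0 0 0 1 0 0 0 ?_
  ext <;> simp [v1_comp, v2_comp, v3_comp, v4_comp] <;> grind [tau_sq]

lemma icosian_v34 : inIcosian (v₃ * v₄) := by
  refine icosian_of_ints (-1) 0 1 0 0 0 1 (-1) ?_
  ext <;> simp [v1_comp, v2_comp, v3_comp, v4_comp] <;> grind [tau_sq]

lemma icosian_v42 : inIcosian (v₄ * v₂) := by
  refine icosian_of_ints 0 (-1) 0 0 1 0 (-1) 0 ?_
  ext <;> simp [v1_comp, v2_comp, v3_comp, v4_comp] <;> grind [tau_sq]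

lemma icosian_v43 : inIcosian (v₄ * v₃) := by
  refine icosian_of_ints 0 0 (-1) 0 1 (-1) 0 1 ?_
  ext <;> simp [v1_comp, v2_comp, v3_comp, v4_comp] <;> grind [tau_sq]

lemma icosian_v44 : inIcosian (v₄ * v₄) := by
  refine icosian_of_ints (-1) 0 0 0 0 0 1 (-1) ?_
  ext <;> simp [v1_comp, v2_comp, v3_comp, v4_comp] <;> grind [tau_sq]

lemma icosian_mul {x y : HR} (hx : inIcosian x) (hy : inIcosian y) : inIcosian (x * y) := by
  -- By `𝔬`-linearity in each factor it suffices to multiply basis elements.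
  have key : ∀ u : HR, inIcosian (u * v₁) → inIcosian (u * v₂) → inIcosian (u * v₃) →
      inIcosian (u * v₄) → inIcosian (u * y) := by
    intro u h1 h2 h3 h4
    obtain ⟨a, b, c, d, ha, hb, hc, hd, rfl⟩ := hy
    simp only [mul_add, mul_smul_comm]
    exact icosian_add (icosian_add (icosian_add (icosian_smul ha h1) (icosian_smul hb h2))
      (icosian_smul hc h3)) (icosian_smul hd h4)
  have k2 := key v₂ (by simpa [v1_eq] using icosian_v2) icosian_v22 icosian_v23 icosian_v24
  have k3 := key v₃ (by simpa [v1_eq] using icosian_v3) icosian_v32 icosian_v33 icosian_v34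
  have k4 := key v₄ (by simpa [v1_eq] using icosian_v4) icosian_v42 icosian_v43 icosian_v44
  obtain ⟨a, b, c, d, ha, hb, hc, hd, rfl⟩ := hx
  simp only [add_mul, smul_mul_assoc]
  exact icosian_add (icosian_add (icosian_add (icosian_smul ha (by simpa [v1_eq] using hy))
    (icosian_smul hb k2)) (icosian_smul hc k3)) (icosian_smul hd k4)

lemma icosian_star {x : HR} (hx : inIcosian x) : inIcosian (star x) := by
  obtain ⟨a, b, c, d, ha, hb, hc, hd, rfl⟩ := hx
  refine ⟨a + c + d * (1 - tau), -b, -c, -d, inO_add (inO_add ha hc)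
    (inO_mul hd (inO_sub inO_one inO_tau)), inO_neg hb, inO_neg hc, inO_neg hd, ?_⟩
  ext <;> simp [v1_comp, v2_comp, v3_comp, v4_comp] <;> ring

lemma icosian_inHK {x : HR} (hx : inIcosian x) : inHK x := by
  obtain ⟨a, b, c, d, ha, hb, hc, hd, rfl⟩ := hx
  have ha := inK_of_inO ha
  have hb := inK_of_inO hb
  have hc := inK_of_inO hc
  have hd := inK_of_inO hd
  have hh : inK (1 / 2) := by simpa using inK_rat (1 / 2)
  have ht := inK_mul hh (inK_of_inO inO_tau)
  refine ⟨?_, ?_, ?_, ?_⟩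
  · convert inK_add (inK_add ha (inK_mul hc hh)) (inK_mul hd (inK_sub hh ht)) using 1
    simp [v1_comp, v2_comp, v3_comp, v4_comp, -mul_eq_mul_left_iff]; ring
  · convert inK_add (inK_add hb (inK_mul hc hh)) (inK_mul hd ht) using 1
    simp [v1_comp, v2_comp, v3_comp, v4_comp, -mul_eq_mul_left_iff]; ring
  · convert inK_mul hc hh using 1
    simp [v1_comp, v2_comp, v3_comp, v4_comp]
  · convert inK_add (inK_mul hc hh) (inK_mul hd hh) using 1
    simp [v1_comp, v2_comp, v3_comp, v4_comp]

lemma twist_add {x y : HR} (hx : inHK x) (hy : inHK y) : twist (x + y) = twist x + twist y := by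
  obtain ⟨h1, h2, h3, h4⟩ := hx
  obtain ⟨k1, k2, k3, k4⟩ := hy
  ext <;> simp [twist_comp, gal_add, *]

lemma twist_smul {r : ℝ} {x : HR} (hr : inK r) (hx : inHK x) :
    twist (r • x) = gal r • twist x := by
  obtain ⟨h1, h2, h3, h4⟩ := hx
  ext <;> simp [twist_comp, gal_mul, *]

/-- The twist map is an anti-automorphism: it composes the Galois automorphism with the exchange
of the units `j` and `k`, which reverses products. -/
lemma twist_mul {x y : HR} (hx : inHK x) (hy : inHK y) : twist (x * y) = twist y * twist x := by
  obtain ⟨h1, h2, h3, h4⟩ := hx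
  obtain ⟨k1, k2, k3, k4⟩ := hy
  ext <;> simp (maxDischargeDepth := 8) [twist_comp, gal_mul, gal_add, gal_sub, inK_add, inK_sub, inK_mul, *] <;> ring

lemma twist_star {x : HR} (hx : inHK x) : twist (star x) = star (twist x) := by
  obtain ⟨h1, h2, h3, h4⟩ := hx
  ext <;> simp [twist_comp, gal_neg, *]

lemma twist_twist {x : HR} (hx : inHK x) : twist (twist x) = x := by
  obtain ⟨h1, h2, h3, h4⟩ := hx
  ext <;> simp [twist_comp, gal_gal, *]

lemma inHK_twist {x : HR} (hx : inHK x) : inHK (twist x) := by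
  obtain ⟨h1, h2, h3, h4⟩ := hx
  exact ⟨inK_gal h1, inK_gal h2, inK_gal h4, inK_gal h3⟩

lemma normSq_twist {x : HR} (hx : inHK x) : normSq (twist x) = gal (normSq x) := by
  obtain ⟨h1, h2, h3, h4⟩ := hx
  have hsq : ∀ {y : ℝ}, inK y → inK (y ^ 2) ∧ gal (y ^ 2) = gal y ^ 2 := by
    intro y hy
    rw [pow_two, pow_two]
    exact ⟨inK_mul hy hy, gal_mul hy hy⟩
  simp (maxDischargeDepth := 8) [normSq_def', twist_comp, gal_add, inK_add, hsq, *]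
  ring

lemma gal_half : gal (1 / 2) = 1 / 2 := by
  simpa using gal_rat (1 / 2)

lemma twist_icosian_eq {a b c d : ℝ} (ha : inO a) (hb : inO b) (hc : inO c) (hd : inO d) :
    twist (a • v₁ + b • v₂ + c • v₃ + d • v₄)
      = gal a • v₁ + gal b • v₂ + (gal c + gal d) • v₃ + (-gal d) • v₄ := by
  have hh : inK (1 / 2) := by simpa using inK_rat (1 / 2)
  have h1 : twist v₁ = v₁ := by ext <;> simp [twist_comp, v1_comp, gal_one, gal_zero]
  have h2 : twist v₂ = v₂ := by ext <;> simp [twist_comp, v2_comp, gal_one, gal_zero]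
  have h3 : twist v₃ = v₃ := by
    ext <;> simpa [twist_comp, v3_comp] using gal_half
  have hgt : gal (tau / 2) = (1 - tau) / 2 := by
    rw [div_eq_mul_one_div, gal_mul (inK_of_inO inO_tau) hh, gal_tau, gal_half]; ring
  have hgt' : gal ((1 - tau) / 2) = tau / 2 := by
    rw [← hgt, gal_gal]
    simpa [div_eq_mul_one_div tau] using inK_mul (inK_of_inO inO_tau) hh
  have h4 : twist v₄ = v₃ - v₄ := by
    have := gal_half
    rw [one_div] at this
    ext <;> simp [twist_comp, v3_comp, v4_comp, gal_zero, hgt, hgt', this] <;> ring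
  have i1 := icosian_smul ha icosian_v1
  have i2 := icosian_smul hb icosian_v2
  have i3 := icosian_smul hc icosian_v3
  have i4 := icosian_smul hd icosian_v4
  rw [twist_add (icosian_inHK (icosian_add (icosian_add i1 i2) i3)) (icosian_inHK i4),
    twist_add (icosian_inHK (icosian_add i1 i2)) (icosian_inHK i3),
    twist_add (icosian_inHK i1) (icosian_inHK i2),
    twist_smul (inK_of_inO ha) (icosian_inHK icosian_v1),
    twist_smul (inK_of_inO hb) (icosian_inHK icosian_v2),
    twist_smul (inK_of_inO hc) (icosian_inHK icosian_v3),
    twist_smul (inK_of_inO hd) (icosian_inHK icosian_v4), h1, h2, h3, h4]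
  module

lemma icosian_twist {x : HR} (hx : inIcosian x) : inIcosian (twist x) := by
  obtain ⟨a, b, c, d, ha, hb, hc, hd, rfl⟩ := hx
  rw [twist_icosian_eq ha hb hc hd]
  exact ⟨_, _, _, _, inO_gal ha, inO_gal hb, inO_add (inO_gal hc) (inO_gal hd),
    inO_neg (inO_gal hd), rfl⟩

/-- Reduced traces `x + x̄ = 2 Re x` of icosians lie in `𝔬`. -/
lemma inO_trace {x : HR} (hx : inIcosian x) : inO (2 * x.re) := by
  obtain ⟨a, b, c, d, ha, hb, hc, hd, rfl⟩ := hx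
  have : inO (2 * a + c + d * (1 - tau)) :=
    inO_add (inO_add (inO_mul (inO_ofNat 2) ha) hc) (inO_mul hd (inO_sub inO_one inO_tau))
  convert this using 1
  simp [v1_comp, v2_comp, v3_comp, v4_comp]; ring

/-- The reduced norm of `a v₁ + b v₂ + c v₃ + d v₄` is a quadratic form in `a, b, c, d` with
coefficients in `𝔬`. -/
lemma inO_normSq {x : HR} (hx : inIcosian x) : inO (normSq x) := by
  obtain ⟨a, b, c, d, ha, hb, hc, hd, rfl⟩ := hx
  have : inO (a * a + b * b + c * c + d * d + a * c + b * c + a * d * (1 - tau) + b * d * tau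
      + c * d) := by
    have ht := inO_tau
    have h1 := inO_sub inO_one inO_tau
    apply_rules [inO_add, inO_mul]
  convert this using 1
  simp [normSq_def', v1_comp, v2_comp, v3_comp, v4_comp]
  linear_combination d ^ 2 / 2 * tau_sq

/-- The trace form on `𝕀` is unimodular over `𝔬`, so the reduced traces `tr(q g)`, `g ∈ 𝕀`, of a
primitive icosian `q` generate the unit ideal. -/
lemma exists_trace_one {q : HR} (hq : IPrimitive q) (hq0 : q ≠ 0) :
    ∃ g, inIcosian g ∧ 2 * (q * g).re = 1 := by
  obtain ⟨hqI, hprim⟩ := hq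
  let S : Set ℝ := {x | ∃ g, inIcosian g ∧ 2 * (q * g).re = x}
  have hO : ∀ x ∈ S, inO x := by
    rintro x ⟨g, hg, rfl⟩
    exact inO_trace (icosian_mul hqI hg)
  have hsub : ∀ x ∈ S, ∀ y ∈ S, x - y ∈ S := by
    rintro x ⟨g, hg, rfl⟩ y ⟨h, hh, rfl⟩
    exact ⟨g - h, Isub.sub_mem hg hh, by rw [mul_sub, re_sub]; ring⟩
  have hmul : ∀ x ∈ S, ∀ r, inO r → r * x ∈ S := by
    rintro x ⟨g, hg, rfl⟩ r hr
    exact ⟨r • g, icosian_smul hr hg, by rw [mul_smul_comm, re_smul, smul_eq_mul]; ring⟩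
  obtain ⟨a, b, c, d, ha, hb, hc, hd, hqe⟩ := hqI
  -- The four witnesses are the basis of `𝕀` dual to `v₁, v₂, v₃, v₄` for the trace form.
  have hSa : a ∈ S := by
    refine ⟨((-1 : ℝ)) • v₁ + (1 : ℝ) • v₂ + tau • v₃ + (1 - 2 * tau) • v₄,
      icosian_of_ints (-1) 0 1 0 0 1 1 (-2) (by push_cast; module), ?_⟩
    rw [hqe]; simp [v1_comp, v2_comp, v3_comp, v4_comp]; grind [tau_sq]
  have hSb : b ∈ S := by
    refine ⟨(1 : ℝ) • v₁ + (-2 : ℝ) • v₂ + (1 - tau) • v₃ + (-1 + 2 * tau) • v₄,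
      icosian_of_ints 1 0 (-2) 0 1 (-1) (-1) 2 (by push_cast; module), ?_⟩
    rw [hqe]; simp [v1_comp, v2_comp, v3_comp, v4_comp]; grind [tau_sq]
  have hSc : c ∈ S := by
    refine ⟨tau • v₁ + (1 - tau) • v₂ + (-2 : ℝ) • v₃ + (2 : ℝ) • v₄,
      icosian_of_ints 0 1 1 (-1) (-2) 0 2 0 (by push_cast; module), ?_⟩
    rw [hqe]; simp [v1_comp, v2_comp, v3_comp, v4_comp]; grind [tau_sq]
  have hSd : d ∈ S := by
    refine ⟨(1 - 2 * tau) • v₁ + (-1 + 2 * tau) • v₂ + (2 : ℝ) • v₃ + (-4 : ℝ) • v₄,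
      icosian_of_ints 1 (-2) (-1) 2 2 0 (-4) 0 (by push_cast; module), ?_⟩
    rw [hqe]; simp [v1_comp, v2_comp, v3_comp, v4_comp]; grind [tau_sq]
  have hne : ∃ x ∈ S, x ≠ 0 := by
    by_contra! hall
    apply hq0
    rw [hqe, hall a hSa, hall b hSb, hall c hSc, hall d hSd]
    simp
  obtain ⟨δ, hδS, hδ0, hδ⟩ := exists_generator S hO hsub hmul hne
  obtain ⟨a', ha', rfl⟩ := hδ a hSa
  obtain ⟨b', hb', rfl⟩ := hδ b hSb
  obtain ⟨c', hc', rfl⟩ := hδ c hSc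
  obtain ⟨d', hd', rfl⟩ := hδ d hSd
  -- `δ` divides every coordinate of `q`, so primitivity makes it a unit.
  have hinv : inO δ⁻¹ := by
    apply hprim _ (inK_inv (inK_of_inO (hO δ hδS)))
    refine ⟨a', b', c', d', ha', hb', hc', hd', ?_⟩
    rw [hqe]
    simp only [smul_add, smul_smul]
    congr 1 <;> [congr 1 <;> [congr 1; skip]; skip] <;> congr 1 <;> field_simp
  have := hmul δ hδS _ hinv
  rwa [inv_mul_cancel₀ hδ0] at this

/-! ### The lattice `L` -/

lemma mem_L_of_ints {x : HR} (a b c d : ℤ)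
    (hx : x = (a : ℝ) • w₁ + (b : ℝ) • w₂ + (c : ℝ) • w₃ + (d : ℝ) • w₄) : x ∈ Lsub := by
  have hw : ∀ w ∈ ({w₁, w₂, w₃, w₄} : Set HR), ∀ m : ℤ, (m : ℝ) • w ∈ Lsub := by
    intro w hw m
    rw [Int.cast_smul_eq_zsmul]
    exact Lsub.zsmul_mem (Submodule.subset_span hw) m
  rw [hx]
  refine Lsub.add_mem (Lsub.add_mem (Lsub.add_mem (hw _ ?_ a) (hw _ ?_ b)) (hw _ ?_ c))
    (hw _ ?_ d) <;> simp

/-- `L` consists of icosians fixed by the twist map. -/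
lemma L_fixed {x : HR} (hx : x ∈ Lsub) : inIcosian x ∧ twist x = x := by
  change x ∈ Submodule.span ℤ ({w₁, w₂, w₃, w₄} : Set HR) at hx
  have fixed : ∀ {w : HR} (a b c d : ℝ), inO a → inO b → inO c → inO d →
      w = a • v₁ + b • v₂ + c • v₃ + d • v₄ →
      gal a = a → gal b = b → gal c + gal d = c → -gal d = d →
      inIcosian w ∧ twist w = w := by
    intro w a b c d ha hb hc hd hw h1 h2 h3 h4
    refine ⟨⟨a, b, c, d, ha, hb, hc, hd, hw⟩, ?_⟩
    rw [hw, twist_icosian_eq ha hb hc hd, h1, h2, h3, h4]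
  induction hx using Submodule.span_induction with
  | mem x hx =>
    rcases hx with rfl | rfl | rfl | rfl
    · refine fixed 1 0 0 0 inO_one inO_zero inO_zero inO_zero ?_ gal_one gal_zero
        (by simp [gal_zero]) (by simp [gal_zero])
      ext <;> simp [w1_comp, v1_comp]
    · refine fixed (-1) 0 1 0 (inO_neg inO_one) inO_zero inO_one inO_zero ?_
        (by simpa using gal_intCast (-1)) gal_zero
        (by simp [gal_zero, gal_one]) (by simp [gal_zero])
      ext <;> simp [w2_comp, v1_comp, v3_comp] <;> norm_num
    · refine fixed 0 (-1) 0 0 inO_zero (inO_neg inO_one) inO_zero inO_zero ?_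
        gal_zero (by simpa using gal_intCast (-1))
        (by simp [gal_zero]) (by simp [gal_zero])
      ext <;> simp [w3_comp, v2_comp]
    · have g1 := gal_rep (-1) 1
      have g2 := gal_rep 1 (-2)
      refine fixed ((-1 : ℤ) : ℝ) ((2 : ℤ) : ℝ) (((-1 : ℤ) : ℝ) + ((1 : ℤ) : ℝ) * tau)
        (((1 : ℤ) : ℝ) + ((-2 : ℤ) : ℝ) * tau) (inO_int _) (inO_int _) ⟨_, _, rfl⟩ ⟨_, _, rfl⟩ ?_
        (gal_intCast _) (gal_intCast _) ?_ ?_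
      · ext <;> simp [w4_comp, v1_comp, v2_comp, v3_comp, v4_comp] <;> grind [tau_sq]
      · rw [g1, g2]; push_cast; ring
      · rw [g2]; push_cast; ring
  | zero => exact ⟨Isub.zero_mem, by ext <;> simp [twist_comp, gal_zero]⟩
  | add x y _ _ hx hy =>
    exact ⟨icosian_add hx.1 hy.1,
      by rw [twist_add (icosian_inHK hx.1) (icosian_inHK hy.1), hx.2, hy.2]⟩
  | smul m x _ hx =>
    rw [← Int.cast_smul_eq_zsmul ℝ]
    exact ⟨icosian_smul (inO_int m) hx.1,
      by rw [twist_smul (inK_of_inO (inO_int m)) (icosian_inHK hx.1), hx.2, gal_intCast]⟩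

/-- `φ₊(𝕀) ⊆ L`. -/
lemma phi_mem_L {x : HR} (hx : inIcosian x) : x + twist x ∈ Lsub := by
  obtain ⟨_, _, _, _, ⟨a, b, rfl⟩, ⟨c, d, rfl⟩, ⟨e, f, rfl⟩, ⟨g, h, rfl⟩, rfl⟩ := hx
  rw [twist_icosian_eq ⟨_, _, rfl⟩ ⟨_, _, rfl⟩ ⟨_, _, rfl⟩ ⟨_, _, rfl⟩]
  simp only [gal_rep]
  refine mem_L_of_ints (2 * a + b + 2 * e + f + g - h) (2 * e + f + g) (-2 * c - d - 2 * h) (-h) ?_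
  ext <;> simp [w1_comp, w2_comp, w3_comp, w4_comp, v1_comp, v2_comp, v3_comp, v4_comp] <;> grind [tau_sq]

/-! ### The extension -/

/-- Minimality of `n = α² nr(q)` makes `α` and its Galois conjugate coprime: a common prime
divisor would allow dividing `α` by a rational prime or by `√5`. -/
lemma coprime_conj {q : HR} (hq : inIcosian q) {α : ℝ} {n : ℤ} (hα : inO α) (hn : 0 < n)
    (hval : (n : ℝ) = α ^ 2 * normSq q)
    (hmin : ∀ (β : ℝ) (m : ℤ), inO β → 0 < m → (m : ℝ) = β ^ 2 * normSq q → n ≤ m) :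
    ∃ s, inO s ∧ s * α + gal s * gal α = 1 := by
  have hN := inO_normSq hq
  -- No `β ∈ 𝔬` has `α² = k β²` with `k > 1` a rational integer: `n / k ∈ 𝔬 ∩ ℚ = ℤ` would
  -- contradict minimality.
  have nodesc : ∀ (β : ℝ) (k : ℤ), inO β → 1 < k → α ^ 2 = k * β ^ 2 → False := by
    intro β k hβ hk h
    have hk0 : (k : ℝ) ≠ 0 := by exact_mod_cast (by omega : k ≠ 0)
    have hv : β ^ 2 * normSq q = ((n / k : ℚ) : ℝ) := by
      push_cast
      rw [hval, h]; field_simp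
    have hI : inO ((n / k : ℚ) : ℝ) := by
      rw [← hv, pow_two]; exact inO_mul (inO_mul hβ hβ) hN
    obtain ⟨m, hm⟩ := int_of_inO_rat hI
    rw [hm] at hv
    have hnk : n = m * k := by
      push_cast at hm
      rw [div_eq_iff hk0] at hm
      exact_mod_cast hm
    have hmpos : 0 < m := by
      by_contra! hle
      nlinarith
    have := hmin β m hβ hmpos hv.symm
    nlinarith
  obtain ⟨a, b, rfl⟩ := hα
  -- `2a + b` and `a + 3b` are the traces of `α` and `τα`.
  have hcop : IsCoprime (2 * a + b) (a + 3 * b) := by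
    rw [Int.isCoprime_iff_gcd_eq_one]
    by_contra hg
    obtain ⟨p, hp, hpd⟩ := Nat.exists_prime_and_dvd hg
    have hpZ : Prime (p : ℤ) := Nat.prime_iff_prime_int.mp hp
    have h1 : (p : ℤ) ∣ 2 * a + b := (Int.natCast_dvd_natCast.mpr hpd).trans (Int.gcd_dvd_left ..)
    have h2 : (p : ℤ) ∣ a + 3 * b := (Int.natCast_dvd_natCast.mpr hpd).trans (Int.gcd_dvd_right ..)
    by_cases h5 : p = 5
    · subst h5
      obtain ⟨c, hc⟩ := h1
      -- Here `α / √5 = (2c - a) + c τ`, where `2a + b = 5c`.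
      have hb : ((b : ℤ) : ℝ) = 5 * c - 2 * a := by
        have : b = 5 * c - 2 * a := by push_cast at hc; omega
        rw [this]; push_cast; ring
      refine nodesc (((2 * c - a : ℤ) : ℝ) + (c : ℝ) * tau) 5 ⟨_, _, rfl⟩ (by norm_num) ?_
      push_cast
      rw [hb]
      linear_combination (20 * (c : ℝ) ^ 2 - 20 * a * c + 4 * a ^ 2) * tau_sq
    · have hdvd : ∀ x : ℤ, (p : ℤ) ∣ 5 * x → (p : ℤ) ∣ x := by
        intro x hx
        refine (hpZ.dvd_or_dvd hx).resolve_left ?_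
        intro h
        have : p ∣ 5 := by exact_mod_cast h
        exact h5 ((Nat.prime_dvd_prime_iff_eq hp (by norm_num)).mp this)
      obtain ⟨c, rfl⟩ := hdvd a (by
        have := dvd_sub (h1.mul_left 3) h2
        rwa [show 3 * (2 * a + b) - (a + 3 * b) = 5 * a by ring] at this)
      obtain ⟨d, rfl⟩ := hdvd b (by
        have := dvd_sub (h2.mul_left 2) h1
        rwa [show 2 * (↑p * c + 3 * b) - (2 * (↑p * c) + b) = 5 * b by ring] at this)
      have hp1 : (1 : ℤ) < p := by exact_mod_cast hp.one_lt
      refine nodesc ((c : ℝ) + d * tau) (p ^ 2) ⟨_, _, rfl⟩ (by nlinarith) ?_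
      push_cast; ring
  obtain ⟨s, r, hsr⟩ := hcop
  refine ⟨(s : ℝ) + r * tau, ⟨_, _, rfl⟩, ?_⟩
  rw [gal_rep, gal_rep]
  have : (s : ℝ) * (2 * a + b) + r * (a + 3 * b) = 1 := by exact_mod_cast hsr
  linear_combination this + 2 * (r : ℝ) * b * tau_sq

/-- If `tr(p g) = t` and `p̄ z = y t'`, then `t z = p g z + ḡ y t'`, since `p g + ḡ p̄ = t`. Used with
`t' = p̃`, this places `t z` in `p 𝕀 + 𝕀 p̃`. -/
lemma trace_smul_mem {p g z y t' : HR} {t : ℝ} (ht : 2 * (p * g).re = t)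
    (hzy : star p * z = y * t') :
    t • z = p * (g * z) + (star g * y) * t' := by
  have h1 : p * g + star (p * g) = ((t : ℝ) : HR) := by
    rw [self_add_star', ← ht]
  rw [star_mul] at h1
  rw [mul_assoc, ← hzy, ← mul_assoc, ← mul_assoc, ← add_mul, h1, coe_mul_eq_smul]

/-- for an `𝕀`-primitive admissible icosian `q` with extension
`q_α = α q` (where `n = α² nr(q)` is the minimal positive rational integer of
the form `β² nr(q)` with `β ∈ 𝔬`), the CSL determined by `q` is
`L ∩ (1/|q q̃|) · q L q̃ = {q_α x + x̃ q̃_α : x ∈ 𝕀} = φ₊(q_α 𝕀)`. -/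
theorem csl_eq_L_of_extension (q : HR) (hq : IPrimitive q) (hadm : Admissible q)
    (α : ℝ) (n : ℤ) (hα : inO α) (hn : 0 < n)
    (hval : (n : ℝ) = α ^ 2 * Quaternion.normSq q)
    (hmin : ∀ (β : ℝ) (m : ℤ), inO β → 0 < m →
      (m : ℝ) = β ^ 2 * Quaternion.normSq q → n ≤ m) :
    {z : HR | z ∈ Lsub ∧ ∃ x ∈ Lsub, z = (1 / ‖q * twist q‖) • (q * x * twist q)} =
    (fun x => (α • q) * x + twist x * twist (α • q)) '' {x : HR | inIcosian x} := by
  have hqI := hq.1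
  have hqK := icosian_inHK hqI
  have hq0 : q ≠ 0 := by
    rintro rfl
    simp at hval
    omega
  have hnR : (0 : ℝ) < n := by exact_mod_cast hn
  have hαK := inK_of_inO hα
  have hpI : inIcosian (α • q) := icosian_smul hα hqI
  have hpK := icosian_inHK hpI
  have htp : twist (α • q) = gal α • twist q := twist_smul hαK hqK
  -- Both `p = α q` and its twist have reduced norm `n`.
  have hnp : normSq (α • q) = n := by rw [normSq_smul, hval]
  have hntp : normSq (twist (α • q)) = n := by rw [normSq_twist hpK, hnp, gal_intCast]
  -- `|q q̃| |α α'| = n`, so `x ↦ q x q̃ / |q q̃|` is `x ↦ p x p̃ / n` up to sign.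
  have hnorm : ‖q * twist q‖ * |α * gal α| = n := by
    rw [← sq_eq_sq₀ (by positivity) hnR.le, mul_pow, sq_abs, pow_two ‖_‖, ← normSq_eq_norm_mul_self,
      map_mul]
    rw [htp, normSq_smul] at hntp
    rw [normSq_smul] at hnp
    linear_combination (gal α ^ 2 * normSq (twist q)) * hnp + n * hntp
  have hm0 : ‖q * twist q‖ ≠ 0 := by
    intro h
    rw [h, zero_mul] at hnorm
    exact hnR.ne hnorm
  obtain ⟨ε, hε, hεsq⟩ : ∃ ε : ℤ, |α * gal α| = ε * (α * gal α) ∧ ε * ε = 1 := by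
    rcases abs_choice (α * gal α) with h | h
    · exact ⟨1, by rw [h]; simp, rfl⟩
    · exact ⟨-1, by rw [h]; simp, rfl⟩
  have hrot : ∀ x : HR, (n : ℝ) • ((1 / ‖q * twist q‖) • (q * x * twist q))
      = (α • q) * ((ε : ℝ) • x) * twist (α • q) := by
    intro x
    rw [htp]
    simp only [smul_mul_assoc, mul_smul_comm, smul_smul]
    congr 1
    rw [← hnorm, hε]
    field_simp
  have hpp : α • q * star (α • q) = ((n : ℝ) : HR) := by rw [self_mul_star, hnp]
  have hpp' : star (α • q) * (α • q) = ((n : ℝ) : HR) := by rw [star_mul_self, hnp]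
  have htt : star (twist (α • q)) * twist (α • q) = ((n : ℝ) : HR) := by
    rw [star_mul_self, hntp]
  obtain ⟨g₀, hg₀, hg₀t⟩ := exists_trace_one hq hq0
  obtain ⟨s, hs, hsα⟩ := coprime_conj hqI hα hn hval hmin
  generalize hp : α • q = p at *
  ext z
  simp only [Set.mem_setOf_eq, Set.mem_image]
  constructor
  · rintro ⟨hzL, x, hxL, hzx⟩
    obtain ⟨hzI, hzt⟩ := L_fixed hzL
    have hyL : (ε : ℝ) • x ∈ Lsub := by
      rw [Int.cast_smul_eq_zsmul]; exact Lsub.zsmul_mem hxL ε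
    obtain ⟨hyI, hyt⟩ := L_fixed hyL
    have hnz := hrot x
    rw [← hzx] at hnz
    generalize (ε : ℝ) • x = y at *
    have hzy : star p * z = y * twist p := by
      apply smul_right_injective HR hnR.ne'
      change (n : ℝ) • (star p * z) = (n : ℝ) • (y * twist p)
      rw [← mul_smul_comm, hnz, ← mul_assoc, ← mul_assoc, hpp', mul_assoc, coe_mul_eq_smul]
    have ht : 2 * (p * (s • g₀)).re = s * α := by
      rw [← hp, smul_mul_smul_comm, re_smul, smul_eq_mul]
      linear_combination (α * s) * hg₀t
    have hgI : inIcosian (s • g₀) := icosian_smul hs hg₀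
    generalize s • g₀ = g at *
    have key := trace_smul_mem ht hzy
    -- With `u = g z` and `v` the twist of `ḡ y`, the element `(s α) z` is `p u + ṽ p̃`; its twist
    -- is `(s α)' z`, and the two add up to `z`.
    refine ⟨g * z + twist (star g * y), icosian_add (icosian_mul hgI hzI)
      (icosian_twist (icosian_mul (icosian_star hgI) hyI)), ?_⟩
    have hu := icosian_mul hgI hzI
    have hv := icosian_mul (icosian_star hgI) hyI
    have hsαK := inK_of_inO (inO_mul hs hα)
    have key' := congrArg twist key
    rw [twist_smul hsαK (icosian_inHK hzI), hzt, gal_mul (inK_of_inO hs) hαK,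
      twist_add (icosian_inHK (icosian_mul hpI hu))
        (icosian_inHK (icosian_mul hv (icosian_twist hpI))),
      twist_mul hpK (icosian_inHK hu), twist_mul (icosian_inHK hv)
        (inHK_twist hpK), twist_twist hpK] at key'
    rw [twist_add (icosian_inHK hu) (inHK_twist (icosian_inHK hv)),
      twist_twist (icosian_inHK hv)]
    calc p * (g * z + twist (star g * y)) + (twist (g * z) + star g * y) * twist p
        = (p * (g * z) + star g * y * twist p)
          + (twist (g * z) * twist p + p * twist (star g * y)) := by
          rw [mul_add, add_mul]; abel
      _ = z := by rw [← key, ← key', ← add_smul, hsα, one_smul]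
  · rintro ⟨x, hxI, rfl⟩
    have hxK := icosian_inHK hxI
    constructor
    · rw [← twist_mul hpK hxK]
      exact phi_mem_L (icosian_mul hpI hxI)
    · -- `p x + x̃ p̃ = p (x p̃⁻ + p̄ x̃) p̃ / n`, where `p̃⁻` is the quaternion conjugate of `p̃`.
      have hyL : star p * twist x + x * star (twist p) ∈ Lsub := by
        have hy := phi_mem_L (icosian_mul (icosian_star hpI) (icosian_twist hxI))
        rwa [twist_mul (icosian_inHK (icosian_star hpI)) (inHK_twist hxK), twist_twist hxK,
          twist_star hpK] at hy
      refine ⟨(ε : ℝ) • (star p * twist x + x * star (twist p)), ?_, ?_⟩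
      · rw [Int.cast_smul_eq_zsmul]; exact Lsub.zsmul_mem hyL ε
      · apply smul_right_injective HR hnR.ne'
        have hεR : (ε : ℝ) * ε = 1 := by exact_mod_cast hεsq
        simp only
        rw [hrot, smul_smul, hεR, one_smul, mul_add, add_mul, ← mul_assoc, hpp, ← mul_assoc,
          mul_assoc (p * x), htt, coe_mul_eq_smul, mul_coe_eq_smul, smul_mul_assoc, smul_add,
          add_comm]
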